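/- Let E be an equivalence relation on ℕ → ℕ which, as a subset of (ℕ → ℕ) × (ℕ → ℕ) with the product topology, belongs to Σ⁰_2. Then every E^+-learnable countable family of pairwise nonisomorphic structures in Mod is =_{ℕ^ℕ}^+-learnable. -/

import Mathlib

/-!  Common definitions.

`Tower n` is the space ℕ^(ℕ^(n+1)) of the paper: `Tower 0 = ℕ → ℕ`,
`Tower (n+1) = ℕ → Tower n`, each with the product topology (ℕ discrete).
-/

def Tower : ℕ → Type
  | 0 => ℕ → ℕ
  | n + 1 => ℕ → Tower n

instance Tower.topologicalSpace : (n : ℕ) → TopologicalSpace (Tower n)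
  | 0 => inferInstanceAs (TopologicalSpace (ℕ → ℕ))
  | n + 1 => letI := Tower.topologicalSpace n
             inferInstanceAs (TopologicalSpace (ℕ → Tower n))

/-- The Friedman–Stanley jump `E⁺` of an equivalence relation `E` on `X`. -/
def FSJump {X : Type*} (E : X → X → Prop) (p q : ℕ → X) : Prop :=
  (∀ k, ∃ l, E (p k) (q l)) ∧ ∀ l, ∃ k, E (q l) (p k)

/-- The power `E^ω` of an equivalence relation `E` on `X`. -/
def RelPow {X : Type*} (E : X → X → Prop) (p q : ℕ → X) : Prop :=
  ∀ k, E (p k) (q k)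

/-- `eqNatPlus n` is the relation `=_ℕ^{(n+1)+}` on `Tower n = ℕ^(ℕ^(n+1))`. -/
def eqNatPlus : (n : ℕ) → Tower n → Tower n → Prop
  | 0 => FSJump (· = · : ℕ → ℕ → Prop)
  | n + 1 => FSJump (eqNatPlus n)

/-- `eqBairePlus n` is the relation `=_{ℕ^ℕ}^{(n+1)+}` on `Tower (n+1) = ℕ^(ℕ^(n+2))`. -/
def eqBairePlus : (n : ℕ) → Tower (n + 1) → Tower (n + 1) → Prop
  | 0 => FSJump (· = · : (ℕ → ℕ) → (ℕ → ℕ) → Prop)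
  | n + 1 => FSJump (eqBairePlus n)

/-- `FullRel m` on `Tower m = ℕ^(ℕ^(m+1))`: for `m = 2n` it is `(=_ℕ^+)^{n(ω+)}`,
for `m = 2n+1` it is `(=_{ℕ^ℕ}^+)^{n(ω+)}` (with `E^{0(ω+)} = E`,
`E^{(n+1)(ω+)} = ((E^{n(ω+)})^ω)^+`). -/
def FullRel : (m : ℕ) → Tower m → Tower m → Prop
  | 0 => FSJump (· = · : ℕ → ℕ → Prop)
  | 1 => FSJump (· = · : (ℕ → ℕ) → (ℕ → ℕ) → Prop)
  | m + 2 => FSJump (RelPow (FullRel m))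

/-- The pair of canonical elements `(F_{m+1}, I_{m+1})` of `Tower m = ℕ^(ℕ^(m+1))`. -/
def can : (m : ℕ) → Tower m × Tower m
  | 0 => (fun k => if k = 0 then 0 else 1, fun _ => 1)
  | 1 => (fun i k => if i = 0 then 0 else if k + 1 < i then 0 else 1,
          fun i k => if k < i then 0 else 1)
  | m + 2 =>
      (fun i k => if i = 0 then (can m).1 else if k + 1 < i then (can m).1 else (can m).2,
       fun i k => if k < i then (can m).1 else (can m).2)

/-- The canonical element `F_{m+1} ∈ ℕ^(ℕ^(m+1))`. -/
def canF (m : ℕ) : Tower m := (can m).1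

/-- The canonical element `I_{m+1} ∈ ℕ^(ℕ^(m+1))`. -/
def canI (m : ℕ) : Tower m := (can m).2

/-- `p ∈ Tower m = ℕ^(ℕ^(m+1))` is `full_{m+1}`. -/
def IsFull (m : ℕ) (p : Tower m) : Prop := FullRel m p (canF m)

/-- `p ∈ Tower m = ℕ^(ℕ^(m+1))` is `initial_{m+1}`. -/
def IsInitial (m : ℕ) (p : Tower m) : Prop := FullRel m p (canI m)

open Classical in
/-- The permission operator `∧₀`. -/
noncomputable def perm0 (p q : ℕ → ℕ) : ℕ → ℕ :=
  fun k => if ∀ j ≤ k, p j = q j then p k else 1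

/-- The permission operator `∧_{m+1}` on `Tower m = ℕ^(ℕ^(m+1))`
(with `⟨·,·⟩ = Nat.pair`). -/
noncomputable def perm : (m : ℕ) → Tower m → Tower m → Tower m
  | 0, p, q => fun x => max (p (Nat.unpair x).1) (q (Nat.unpair x).2)
  | 1, p, q => fun x => perm0 (p (Nat.unpair x).1) (q (Nat.unpair x).2)
  | m + 2, p, q => fun x k => perm m (p (Nat.unpair x).1 k) (q (Nat.unpair x).2 k)

/-- The operator `⊗_{m+1,i}` on `Tower m = ℕ^(ℕ^(m+1))` (with `⟨·,·⟩ = Nat.pair`). -/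
def otimes : (m : ℕ) → ℕ → Tower m → Tower m
  | 0, i, p => fun k => Nat.pair (p k) i
  | m + 1, i, p => fun k => otimes m i (p k)

/-- `E` continuously reduces to `F`. -/
def ContReduces {X Y : Type*} [TopologicalSpace X] [TopologicalSpace Y]
    (E : X → X → Prop) (F : Y → Y → Prop) : Prop :=
  ∃ f : X → Y, Continuous f ∧ ∀ x x', E x x' ↔ F (f x) (f x')

/-- `SigmaLevel X n` is the pointclass `Σ⁰_{n+1}(X)`: `Σ⁰_1` = open sets,
`Σ⁰_{n+1}` = countable unions of complements of `Σ⁰_n` sets. -/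
def SigmaLevel (X : Type*) [TopologicalSpace X] : ℕ → Set (Set X)
  | 0 => {C | IsOpen C}
  | n + 1 => {C | ∃ A : ℕ → Set X, (∀ i, A i ∈ SigmaLevel X n) ∧ C = ⋃ i, (A i)ᶜ}

/-- The space of `(ι, ar)`-structures with domain ℕ. -/
def Md (ι : Type) (ar : ι → ℕ) : Type := ∀ i : ι, (Fin (ar i) → ℕ) → Bool

instance (ι : Type) (ar : ι → ℕ) : TopologicalSpace (Md ι ar) :=
  inferInstanceAs (TopologicalSpace (∀ i : ι, (Fin (ar i) → ℕ) → Bool))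

/-- Isomorphism of structures with domain ℕ. -/
def Iso {ι : Type} {ar : ι → ℕ} (A B : Md ι ar) : Prop :=
  ∃ σ : ℕ → ℕ, Function.Bijective σ ∧ ∀ i v, A i v = B i (σ ∘ v)

/-- The learning domain of a family: the closure of `K` under isomorphism. -/
def LearnDom {ι : Type} {ar : ι → ℕ} (K : Set (Md ι ar)) : Set (Md ι ar) :=
  {S | ∃ A ∈ K, Iso S A}

/-- The family `K` is `E`-learnable. -/
def Learnable {ι : Type} {ar : ι → ℕ} {X : Type*} [TopologicalSpace X]
    (E : X → X → Prop) (K : Set (Md ι ar)) : Prop :=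
  ∃ Γ : LearnDom K → X, Continuous Γ ∧
    ∀ S S' : LearnDom K, (Iso S.1 S'.1 ↔ E (Γ S) (Γ S'))

/-- A countable family of pairwise nonisomorphic structures. -/
def GoodFamily {ι : Type} {ar : ι → ℕ} (K : Set (Md ι ar)) : Prop :=
  K.Countable ∧ ∀ A ∈ K, ∀ B ∈ K, A ≠ B → ¬ Iso A B

/-- `E` is learn-reducible to `F` (w.r.t. structures in `Md ι ar`). -/
def LearnRed (ι : Type) (ar : ι → ℕ) {X Y : Type*} [TopologicalSpace X]
    [TopologicalSpace Y] (E : X → X → Prop) (F : Y → Y → Prop) : Prop :=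
  ∀ K : Set (Md ι ar), GoodFamily K → Learnable E K → Learnable F K

/-- `E` is compact for learning (w.r.t. structures in `Md ι ar`). -/
def CompactForLearning (ι : Type) (ar : ι → ℕ) {X : Type*} [TopologicalSpace X]
    (E : X → X → Prop) : Prop :=
  ∀ K : Set (Md ι ar), GoodFamily K →
    (Learnable E K ↔ ∀ A ∈ K, ∀ B ∈ K, A ≠ B → Learnable E ({A, B} : Set (Md ι ar)))

/-!
By transitivity, `p E⁺ q` holds iff `p` and `q` meet the same classes among those of a set of
representatives of the entries of `p` and `q`. On the learning domain of a countable family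
countably many representatives suffice, namely the entries of the values of the learner at the
members of the family; and the set of structures whose value meets a given class is `Σ⁰_2`.
Isomorphism is therefore equality of membership in countably many `Σ⁰_2` sets.

To code `y ∈ ⋃ i, (U i)ᶜ`, with every `U i` open, by a countable subset of `ℕ → ℕ`, split `U i` into
disjoint clopen pieces `V i n`. The sequence `n ↦ 1_{V i n}(y)` depends continuously on `y`; it is
`0` if `y ∉ U i` and one of the sequences `Pi.single n 1` otherwise. Once all sequences
`Pi.single n 1` are added to the code, all that it retains is whether it contains `0`.
-/

section SigmaLevel

variable {X Y : Type*} [TopologicalSpace X] [TopologicalSpace Y]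

theorem SigmaLevel.preimage {n : ℕ} {C : Set Y} (hC : C ∈ SigmaLevel Y n) {f : X → Y}
    (hf : Continuous f) : f ⁻¹' C ∈ SigmaLevel X n := by
  induction n generalizing C with
  | zero => exact IsOpen.preimage hf hC
  | succ n ih =>
    obtain ⟨A, hA, rfl⟩ := hC
    exact ⟨fun i => f ⁻¹' A i, fun i => ih (hA i), by
      simp only [Set.preimage_iUnion, Set.preimage_compl]⟩

theorem SigmaLevel.iUnion {n : ℕ} {C : ℕ → Set X} (hC : ∀ k, C k ∈ SigmaLevel X n) :
    ⋃ k, C k ∈ SigmaLevel X n := by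
  cases n with
  | zero => exact isOpen_iUnion hC
  | succ n =>
    choose A hA hCA using hC
    refine ⟨fun i => A i.unpair.1 i.unpair.2, fun _ => hA _ _, ?_⟩
    simp only [hCA, Set.iUnion_unpair fun k i => (A k i)ᶜ]

end SigmaLevel

section ContReduces

variable {X Y Z : Type*} [TopologicalSpace X] [TopologicalSpace Y] [TopologicalSpace Z]

theorem ContReduces.trans {E : X → X → Prop} {F : Y → Y → Prop} {G : Z → Z → Prop}
    (hEF : ContReduces E F) (hFG : ContReduces F G) : ContReduces E G := by
  obtain ⟨f, hf, hEF⟩ := hEF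
  obtain ⟨g, hg, hFG⟩ := hFG
  exact ⟨g ∘ f, hg.comp hf, fun x x' => (hEF x x').trans (hFG _ _)⟩

theorem contReduces_relPow {E : ℕ → X → X → Prop} {F : Y → Y → Prop}
    (h : ∀ n, ContReduces (E n) F) : ContReduces (fun x x' => ∀ n, E n x x') (RelPow F) := by
  choose f hf hEF using h
  exact ⟨fun x n => f n x, continuous_pi hf, fun x x' => forall_congr' fun n => hEF n x x'⟩

end ContReduces

section FSJump

variable {X : Type*}

theorem fsJump_eq_iff_range_eq {p q : ℕ → X} :
    FSJump (· = ·) p q ↔ Set.range p = Set.range q := by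
  simp only [FSJump, Set.Subset.antisymm_iff, Set.range_subset_iff, Set.mem_range, eq_comm]

theorem fsJump_iff_forall_exists_rel_iff {κ : Type*} {E : X → X → Prop} (hE : Equivalence E)
    {z : κ → X} {p q : ℕ → X} (hp : ∀ k, ∃ i, E (p k) (z i)) (hq : ∀ k, ∃ i, E (q k) (z i)) :
    FSJump E p q ↔ ∀ i, (∃ k, E (p k) (z i)) ↔ ∃ k, E (q k) (z i) := by
  constructor
  · rintro ⟨hpq, hqp⟩ i
    constructor <;> rintro ⟨k, hk⟩
    · exact (hpq k).imp fun _ hl => hE.trans (hE.symm hl) hk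
    · exact (hqp k).imp fun _ hl => hE.trans (hE.symm hl) hk
  · refine fun h => ⟨fun k => ?_, fun k => ?_⟩
    · obtain ⟨i, hi⟩ := hp k
      exact ((h i).1 ⟨k, hi⟩).imp fun _ hl => hE.trans hi (hE.symm hl)
    · obtain ⟨i, hi⟩ := hq k
      exact ((h i).2 ⟨k, hi⟩).imp fun _ hl => hE.trans hi (hE.symm hl)

theorem contReduces_relPow_fsJump_eq_of_injective2 [TopologicalSpace X] {c : ℕ → X → X}
    (hc : Function.Injective2 c) (hcont : ∀ n, Continuous (c n)) :
    ContReduces (RelPow (FSJump (· = · : X → X → Prop))) (FSJump (· = · : X → X → Prop)) := by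
  let join (p : ℕ → ℕ → X) (k : ℕ) : X := c k.unpair.1 (p k.unpair.1 k.unpair.2)
  have hjoin : Continuous join := continuous_pi fun k => (hcont _).comp (by fun_prop)
  have range_join (p) :
      Set.range (join p) = Function.uncurry c '' {x | x.2 ∈ Set.range (p x.1)} := by
    ext x
    constructor
    · rintro ⟨k, rfl⟩
      exact ⟨(_, _), ⟨_, rfl⟩, rfl⟩
    · rintro ⟨⟨n, z⟩, ⟨k, hk : p n k = z⟩, rfl⟩
      subst hk
      exact ⟨Nat.pair n k, by simp only [join, Nat.unpair_pair, Function.uncurry_apply_pair]⟩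
  refine ⟨join, hjoin, fun p q => ?_⟩
  simp only [RelPow, fsJump_eq_iff_range_eq, range_join, hc.uncurry.image_injective.eq_iff,
    Set.ext_iff, Prod.forall, Set.mem_ofPred_eq]

theorem contReduces_relPow_fsJump_eq_baire :
    ContReduces (RelPow (FSJump (· = · : (ℕ → ℕ) → (ℕ → ℕ) → Prop)))
      (FSJump (· = · : (ℕ → ℕ) → (ℕ → ℕ) → Prop)) := by
  refine contReduces_relPow_fsJump_eq_of_injective2 (c := fun n g m => Nat.pair n (g m)) ?_ ?_
  · intro n n' g g' h
    have hpair (m) : n = n' ∧ g m = g' m := Nat.pair_eq_pair.1 (congrFun h m)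
    exact ⟨(hpair 0).1, funext fun m => (hpair m).2⟩
  · exact fun n => continuous_pi fun m =>
      (continuous_of_discreteTopology (f := Nat.pair n)).comp (continuous_apply m)

end FSJump

section ClopenBasis

open TopologicalSpace Function

variable {X Y : Type*} [TopologicalSpace X] [TopologicalSpace Y]

theorem isTopologicalBasis_isClopen_of_isInducing {f : X → Y} (hf : Topology.IsInducing f)
    (hY : IsTopologicalBasis {s : Set Y | IsClopen s}) :
    IsTopologicalBasis {s : Set X | IsClopen s} :=
  (hY.isInducing hf).of_isOpen_of_subset (fun _ hs => hs.isOpen)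
    (Set.image_subset_iff.2 fun _ hs => hs.preimage hf.continuous)

variable [SecondCountableTopology Y] (hY : IsTopologicalBasis {s : Set Y | IsClopen s})

include hY

theorem exists_pairwise_disjoint_isClopen_iUnion_eq {U : Set Y} (hU : IsOpen U) :
    ∃ V : ℕ → Set Y, (∀ n, IsClopen (V n)) ∧ Pairwise (Disjoint on V) ∧ ⋃ n, V n = U := by
  obtain ⟨S, hS, hScount, rfl⟩ := hY.exists_countable_biUnion_of_isOpen hU
  obtain ⟨W, hW⟩ := (hScount.insert ∅).exists_eq_range (Set.insert_nonempty _ _)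
  have hWclopen (n) : IsClopen (W n) := by
    have hWn : W n ∈ insert ∅ S := hW ▸ Set.mem_range_self n
    exact hWn.elim (fun h => h ▸ isClopen_empty) fun h => hS h
  refine ⟨disjointed W, fun n => disjointedRec (fun _ i ht => ht.diff (hWclopen i)) (hWclopen n),
    disjoint_disjointed W, ?_⟩
  rw [iUnion_disjointed, ← Set.sUnion_range, ← hW, Set.sUnion_insert, Set.empty_union,
    Set.sUnion_eq_biUnion]

theorem exists_continuous_eq_single_or_eq_zero {U : Set Y} (hU : IsOpen U) :
    ∃ f : Y → ℕ → ℕ, Continuous f ∧ (∀ y ∈ U, ∃ n, f y = Pi.single n 1) ∧ ∀ y ∉ U, f y = 0 := by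
  obtain ⟨V, hV, hdisj, rfl⟩ := exists_pairwise_disjoint_isClopen_iUnion_eq hY hU
  refine ⟨fun y n => (V n).indicator 1 y,
    continuous_pi fun n => (hV n).continuous_indicator continuous_const, fun y hy => ?_,
    fun y hy => funext fun n => Set.indicator_of_notMem (fun h => hy (Set.mem_iUnion_of_mem n h)) 1⟩
  obtain ⟨n, hn⟩ := Set.mem_iUnion.1 hy
  refine ⟨n, funext fun m => ?_⟩
  obtain rfl | hmn := eq_or_ne m n
  · rw [Pi.single_eq_same]
    exact Set.indicator_of_mem hn 1
  · rw [Pi.single_eq_of_ne hmn]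
    exact Set.indicator_of_notMem (Set.disjoint_right.1 (hdisj hmn) hn) 1

theorem exists_continuous_range_eq_of_mem_sigmaLevel_one {B : Set Y} (hB : B ∈ SigmaLevel Y 1) :
    ∃ code : Y → ℕ → ℕ → ℕ, Continuous code ∧ ∀ y, Set.range (code y) =
      Set.range (fun n => (Pi.single n 1 : ℕ → ℕ)) ∪ {x | x = 0 ∧ y ∈ B} := by
  obtain ⟨U, hU, rfl⟩ := hB
  choose f hf hfU hf0 using fun i => exists_continuous_eq_single_or_eq_zero hY (hU i)
  let e := Equiv.natSumNatEquivNat.symm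
  refine ⟨fun y => Sum.elim (fun n => Pi.single n 1) (f · y) ∘ e, ?_, fun y => ?_⟩
  · refine continuous_pi fun k => ?_
    simp only [comp_apply]
    cases e k with
    | inl n => exact continuous_const
    | inr i => exact hf i
  · rw [e.surjective.range_comp, Set.Sum.elim_range]
    refine subset_antisymm (Set.union_subset Set.subset_union_left ?_)
      (Set.union_subset_union_right _ ?_)
    · rintro _ ⟨i, rfl⟩
      by_cases hy : y ∈ U i
      · exact .inl ((hfU i y hy).imp fun _ => Eq.symm)
      · exact .inr ⟨hf0 i y hy, Set.mem_iUnion_of_mem i hy⟩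
    · rintro _ ⟨rfl, hy⟩
      exact (Set.mem_iUnion.1 hy).imp fun i hi => hf0 i y hi

theorem contReduces_mem_iff_of_mem_sigmaLevel_one {B : Set Y} (hB : B ∈ SigmaLevel Y 1) :
    ContReduces (fun y y' => y ∈ B ↔ y' ∈ B) (FSJump (· = · : (ℕ → ℕ) → (ℕ → ℕ) → Prop)) := by
  obtain ⟨code, hcode, range_code⟩ := exists_continuous_range_eq_of_mem_sigmaLevel_one hY hB
  have zero_notMem : (0 : ℕ → ℕ) ∉ Set.range fun n => Pi.single n 1 := by
    rintro ⟨n, hn⟩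
    exact one_ne_zero (Pi.single_eq_zero_iff.1 hn)
  have zero_mem_range_code (y) : 0 ∈ Set.range (code y) ↔ y ∈ B := by
    simp only [range_code, Set.mem_union, zero_notMem, Set.mem_ofPred_eq, true_and, false_or]
  refine ⟨code, hcode, fun y y' => ?_⟩
  rw [fsJump_eq_iff_range_eq]
  constructor <;> intro h
  · simp only [range_code, h]
  · simp only [← zero_mem_range_code, h]

theorem contReduces_forall_mem_iff_of_mem_sigmaLevel_one {κ : Type*} [Countable κ]
    {B : κ → Set Y} (hB : ∀ i, B i ∈ SigmaLevel Y 1) :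
    ContReduces (fun y y' => ∀ i, y ∈ B i ↔ y' ∈ B i)
      (FSJump (· = · : (ℕ → ℕ) → (ℕ → ℕ) → Prop)) := by
  cases isEmpty_or_nonempty κ with
  | inl _ => exact ⟨0, continuous_const, fun _ _ =>
      iff_of_true isEmptyElim (fsJump_eq_iff_range_eq.2 rfl)⟩
  | inr _ =>
    obtain ⟨e, he⟩ := exists_surjective_nat κ
    simp only [he.forall]
    exact ContReduces.trans
      (contReduces_relPow fun n => contReduces_mem_iff_of_mem_sigmaLevel_one hY (hB (e n)))
      contReduces_relPow_fsJump_eq_baire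

theorem ContReduces.fsJump_eq_of_fsJump {R : Y → Y → Prop} {s : Set Y} (hs : s.Countable)
    (hRs : ∀ y, ∃ a ∈ s, R y a) {E : X → X → Prop} (hE : Equivalence E)
    (hclass : ∀ x, {z | E z x} ∈ SigmaLevel X 1) (hR : ContReduces R (FSJump E)) :
    ContReduces R (FSJump (· = · : (ℕ → ℕ) → (ℕ → ℕ) → Prop)) := by
  obtain ⟨Γ, hΓ, hRΓ⟩ := hR
  have := hs.to_subtype
  let z (i : s × ℕ) : X := Γ i.1 i.2
  let meets (i : s × ℕ) : Set Y := ⋃ k, {y | E (Γ y k) (z i)}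
  have hmeets (i) : meets i ∈ SigmaLevel Y 1 := SigmaLevel.iUnion fun k =>
    SigmaLevel.preimage (hclass (z i)) ((continuous_apply k).comp hΓ)
  have exists_rel_z (y k) : ∃ i, E (Γ y k) (z i) := by
    obtain ⟨a, ha, hya⟩ := hRs y
    obtain ⟨l, hl⟩ := ((hRΓ y a).1 hya).1 k
    exact ⟨(⟨a, ha⟩, l), hl⟩
  have hR_iff (y y') : R y y' ↔ ∀ i, y ∈ meets i ↔ y' ∈ meets i := by
    simp only [hRΓ, fsJump_iff_forall_exists_rel_iff hE (exists_rel_z y) (exists_rel_z y'), meets,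
      Set.mem_iUnion, Set.mem_ofPred_eq]
  obtain ⟨g, hg, hgR⟩ := contReduces_forall_mem_iff_of_mem_sigmaLevel_one hY hmeets
  exact ⟨g, hg, fun y y' => (hR_iff y y').trans (hgR y y')⟩

end ClopenBasis

section Learning

variable {ι : Type} {ar : ι → ℕ}

instance [Countable ι] : SecondCountableTopology (Md ι ar) :=
  inferInstanceAs (SecondCountableTopology (∀ i : ι, (Fin (ar i) → ℕ) → Bool))

theorem Md.isTopologicalBasis_isClopen :
    TopologicalSpace.IsTopologicalBasis {s : Set (Md ι ar) | IsClopen s} :=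
  _root_.isTopologicalBasis_isClopen (X := ∀ i : ι, (Fin (ar i) → ℕ) → Bool)

theorem Iso.refl (A : Md ι ar) : Iso A A :=
  ⟨id, Function.bijective_id, fun _ _ => rfl⟩

theorem subset_learnDom (K : Set (Md ι ar)) : K ⊆ LearnDom K :=
  fun A hA => ⟨A, hA, Iso.refl A⟩

theorem learnable_iff_contReduces {X : Type*} [TopologicalSpace X] {E : X → X → Prop}
    {K : Set (Md ι ar)} :
    Learnable E K ↔ ContReduces (fun S S' : LearnDom K => Iso S.1 S'.1) E :=
  Iff.rfl

theorem stmt_18_general [Countable ι] {X : Type*} [TopologicalSpace X] {E : X → X → Prop}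
    (hE : Equivalence E) (hclass : ∀ x, {z | E z x} ∈ SigmaLevel X 1) {K : Set (Md ι ar)}
    (hK : K.Countable) (hlearn : Learnable (FSJump E) K) :
    Learnable (FSJump (· = · : (ℕ → ℕ) → (ℕ → ℕ) → Prop)) K := by
  rw [learnable_iff_contReduces] at hlearn ⊢
  have hbasis := isTopologicalBasis_isClopen_of_isInducing
    (Topology.IsInducing.subtypeVal (t := LearnDom K)) Md.isTopologicalBasis_isClopen
  have hK' : (Subtype.val ⁻¹' K : Set (LearnDom K)).Countable :=
    hK.preimage Subtype.val_injective
  have exists_iso (S : LearnDom K) : ∃ A ∈ (Subtype.val ⁻¹' K : Set (LearnDom K)), Iso S.1 A.1 := by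
    obtain ⟨A, hA, hSA⟩ := S.2
    exact ⟨⟨A, subset_learnDom K hA⟩, hA, hSA⟩
  exact hlearn.fsJump_eq_of_fsJump hbasis hK' exists_iso hE hclass

end Learning

/-- if `E` is a `Σ⁰_2` (here `SigmaLevel _ 1`) equivalence relation on
`ℕ → ℕ`, then every `E⁺`-learnable countable family of pairwise nonisomorphic
structures is `=_{ℕ^ℕ}^+`-learnable. -/
theorem stmt_18 {ι : Type} [Countable ι] (ar : ι → ℕ) (har : ∃ i, 2 ≤ ar i)
    (E : (ℕ → ℕ) → (ℕ → ℕ) → Prop) (hE : Equivalence E)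
    (hSigma : {x : (ℕ → ℕ) × (ℕ → ℕ) | E x.1 x.2} ∈
      SigmaLevel ((ℕ → ℕ) × (ℕ → ℕ)) 1) :
    ∀ K : Set (Md ι ar), GoodFamily K →
      Learnable (FSJump E) K →
        Learnable (FSJump (· = · : (ℕ → ℕ) → (ℕ → ℕ) → Prop)) K :=
  fun _ hK => stmt_18_general hE (fun x => SigmaLevel.preimage hSigma (.prodMk_left x)) hK.1
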